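/- Let U and V be finite-dimensional vector spaces over a field K with more than 2 elements, and let S be a linear subspace of L(U,V) with codim S ≤ 2·dim V − 4. Then either S has special type 1, or every quasi-range-compatible additive group homomorphism F : S → V is local. -/

import Mathlib

open Module

set_option linter.unusedSectionVars false

namespace QRC

section
variable {K U V : Type*} [Field K] [AddCommGroup U] [Module K U] [FiniteDimensional K U]
    [AddCommGroup V] [Module K V] [FiniteDimensional K V]

/-- quasi-range-compatible with respect to the line spanned by `d` -/
def QR (S : Submodule K (U →ₗ[K] V)) (F : S →+ V) (d : V) : Prop :=
  ∀ s : S, d ∉ LinearMap.range (s : U →ₗ[K] V) → F s ∈ LinearMap.range (s : U →ₗ[K] V)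

def Loc (S : Submodule K (U →ₗ[K] V)) (F : S →+ V) : Prop :=
  ∃ x : U, ∀ s : S, F s = (s : U →ₗ[K] V) x

/-- evaluation space -/
abbrev ev {X Y : Type*} [AddCommGroup X] [Module K X] [AddCommGroup Y] [Module K Y]
    (S : Submodule K (X →ₗ[K] Y)) (x : X) : Submodule K Y :=
  Submodule.map (LinearMap.applyₗ x) S

structure Perp (S : Submodule K (U →ₗ[K] V)) (T : Submodule K (V →ₗ[K] U)) : Prop where
  memS : ∀ s, s ∈ S ↔ ∀ t ∈ T, LinearMap.trace K V (s ∘ₗ t) = 0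
  memT : ∀ t, t ∈ T ↔ ∀ s ∈ S, LinearMap.trace K V (s ∘ₗ t) = 0
  dim : finrank K T + finrank K S = finrank K (U →ₗ[K] V)

lemma trace_r1 (s : U →ₗ[K] V) (g : V →ₗ[K] K) (x : U) :
    LinearMap.trace K V (s ∘ₗ g.smulRight x) = g (s x) := by
  have : s ∘ₗ g.smulRight x = g.smulRight (s x) := by ext v; simp
  rw [this, LinearMap.trace_smulRight]

lemma trace_r1' (f : U →ₗ[K] K) (y : V) (t : V →ₗ[K] U) :
    LinearMap.trace K V (f.smulRight y ∘ₗ t) = f (t y) := by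
  have : f.smulRight y ∘ₗ t = (f ∘ₗ t).smulRight y := by ext v; simp
  rw [this, LinearMap.trace_smulRight]; rfl

lemma exists_perp (S : Submodule K (U →ₗ[K] V)) : ∃ T, Perp S T := by
  let B : (U →ₗ[K] V) →ₗ[K] Dual K (V →ₗ[K] U) :=
    LinearMap.mk₂ K (fun s t => LinearMap.trace K V (s ∘ₗ t))
      (by intro a b c; simp [LinearMap.add_comp])
      (by intro a b c; simp [LinearMap.smul_comp])
      (by intro a b c; simp [LinearMap.comp_add])
      (by intro a b c; simp [LinearMap.comp_smul])
  have hB : Function.Injective B := by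
    rw [injective_iff_map_eq_zero]
    intro s hs
    ext x
    rw [LinearMap.zero_apply, ← Module.forall_dual_apply_eq_zero_iff K]
    intro g
    have := LinearMap.congr_fun hs (g.smulRight x)
    simpa [B, trace_r1] using this
  have hB' : ∀ s t, B s t = LinearMap.trace K V (s ∘ₗ t) := fun s t => rfl
  refine ⟨(S.map B).dualCoannihilator, ?_, ?_, ?_⟩
  · intro s
    have : s ∈ S ↔ B s ∈ S.map B := by
      constructor
      · exact fun h => ⟨s, h, rfl⟩
      · rintro ⟨s', h, e⟩
        rwa [← hB e]
    rw [this]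
    conv_lhs => rw [← Subspace.dualCoannihilator_dualAnnihilator_eq (W := S.map B)]
    rw [Submodule.mem_dualAnnihilator]
    rfl
  · intro t
    rw [Submodule.mem_dualCoannihilator]
    simp [hB']
  · have h1 := Subspace.finrank_add_finrank_dualCoannihilator_eq (S.map B)
    rw [← (Submodule.equivMapOfInjective B hB S).finrank_eq] at h1
    rw [add_comm, h1, Module.finrank_linearMap, Module.finrank_linearMap, mul_comm]

lemma Perp.r1S {S : Submodule K (U →ₗ[K] V)} {T} (h : Perp S T) (f : U →ₗ[K] K) (y : V) :
    f.smulRight y ∈ S ↔ ∀ t ∈ T, f (t y) = 0 := by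
  rw [h.memS]; simp [trace_r1']

lemma Perp.r1T {S : Submodule K (U →ₗ[K] V)} {T} (h : Perp S T) (g : V →ₗ[K] K) (x : U) :
    g.smulRight x ∈ T ↔ ∀ s ∈ S, g (s x) = 0 := by
  rw [h.memT]; simp [trace_r1]

lemma ex_mu (hK : 2 < Cardinal.mk K) : ∃ m : K, m ≠ 0 ∧ m ≠ 1 := by
  apply Cardinal.exists_ne_ne_of_three_le
  have := Order.succ_le_of_lt hK
  have e : (3 : Cardinal) = Order.succ 2 := by
    have := Cardinal.succ_natCast 2
    norm_num at this ⊢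
    rw [this]
  rw [e]; exact this

lemma avoid3 (hK : ∃ m : K, m ≠ 0 ∧ m ≠ 1) (A B C : Submodule K V) (hA : A ≠ ⊤) (hB : B ≠ ⊤)
    (hC : C ≠ ⊤) : ∃ v, v ∉ A ∧ v ∉ B ∧ v ∉ C := by
  obtain ⟨m, hm0, hm1⟩ := hK
  have key : ∀ (A : Submodule K V) (u v : V) (a b : K), v ∉ A → a ≠ b → u + a • v ∈ A →
      u + b • v ∈ A → False := by
    intro A u v a b hv hab h1 h2
    have := A.sub_mem h1 h2
    rw [add_sub_add_left_eq_sub, ← sub_smul] at this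
    exact hv ((A.smul_mem_iff (sub_ne_zero.2 hab)).1 this)
  have ex : ∀ A : Submodule K V, A ≠ ⊤ → ∃ v, v ∉ A := by
    intro A hA
    by_contra! h
    exact hA (Submodule.eq_top_iff'.2 h)
  have keyC : ∀ (C : Submodule K V) (u v : V) (a : K), v ∈ C → u ∉ C → u + a • v ∉ C := by
    intro C u v a hv hu h
    exact hu ((Submodule.add_mem_iff_left _ (C.smul_mem a hv)).1 h)
  obtain ⟨v, hvA, hvB⟩ : ∃ v, v ∉ A ∧ v ∉ B := by
    obtain ⟨v, hv⟩ := ex A hA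
    obtain ⟨u, hu⟩ := ex B hB
    by_cases hvB : v ∈ B
    · by_cases h0 : u + (0:K) • v ∈ A
      · exact ⟨u + (1:K) • v, fun h => key A u v 0 1 hv zero_ne_one h0 h, keyC B u v 1 hvB hu⟩
      · exact ⟨u + (0:K) • v, h0, keyC B u v 0 hvB hu⟩
    · exact ⟨v, hv, hvB⟩
  by_cases hvC : v ∈ C
  · obtain ⟨u, hu⟩ := ex C hC
    have c := fun a => keyC C u v a hvC hu
    have ka := fun a b => key A u v a b hvA
    have kb := fun a b => key B u v a b hvB
    by_contra! hh
    have w := fun a h1 h2 => c a (hh _ h1 h2)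
    by_cases a0 : u + (0:K) • v ∈ A
    · have n1 := ka 0 1 zero_ne_one a0
      have n2 := ka 0 m hm0.symm a0
      exact kb 1 m hm1.symm (not_not.1 (w 1 n1)) (not_not.1 (w m n2))
    · have b0 := not_not.1 (w 0 a0)
      have n1 := kb 0 1 zero_ne_one b0
      have n2 := kb 0 m hm0.symm b0
      exact ka 1 m hm1.symm (not_not.1 fun h => w 1 h n1) (not_not.1 fun h => w m h n2)
  · exact ⟨v, hvA, hvB, hvC⟩

/-- base case -/
lemma base (hK : ∃ m : K, m ≠ 0 ∧ m ≠ 1) (hn : 2 ≤ finrank K V)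
    (S : Submodule K (U →ₗ[K] V)) (x0 : U) (hS : ∀ s, s ∈ S ↔ s x0 = 0)
    (F : S →+ V) (d : V) (hd : d ≠ 0) (hF : QR S F d) : Loc S F := by
  have hline : ∀ v : V, Submodule.span K {v} ≠ ⊤ := by
    intro v h
    have h1 := finrank_span_le_card (R := K) ({v} : Set V)
    rw [h, finrank_top] at h1
    simp at h1; omega
  have hS' : ∀ (f : U →ₗ[K] K) (hf : f x0 = 0) (y : V), f.smulRight y ∈ S := by
    intro f hf y; rw [hS]; simp [hf]
  let D := Submodule.span K {d}
  have ha : ∀ (f : U →ₗ[K] K) (hf : f x0 = 0) (y : V), y ∉ D →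
      ∃ a : K, F ⟨f.smulRight y, hS' f hf y⟩ = a • y := by
    intro f hf y hy
    have h1 := hF ⟨f.smulRight y, hS' f hf y⟩
    have h2 : d ∉ LinearMap.range (f.smulRight y) := by
      rintro ⟨u, hu⟩
      apply hy
      rw [Submodule.mem_span_singleton]
      simp only [LinearMap.smulRight_apply] at hu
      have : f u ≠ 0 := by
        intro h; rw [h] at hu; simp at hu; exact hd hu.symm
      exact ⟨(f u)⁻¹, by rw [← hu, smul_smul, inv_mul_cancel₀ this, one_smul]⟩
    obtain ⟨u, hu⟩ := h1 h2
    exact ⟨f u, hu.symm⟩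
  choose! a ha using ha
  have hy0 : ∀ y, y ∉ D → y ≠ 0 := by
    rintro y hy rfl; exact hy D.zero_mem
  have fact1 : ∀ f : U →ₗ[K] K, f x0 = 0 → ∀ y z, y ∉ D → z ∉ D → y + z ∉ D →
      z ∉ Submodule.span K {y} → a f y = a f z := by
    intro f hf y z hy hz hyz hind
    have e : (⟨f.smulRight (y + z), hS' f hf (y + z)⟩ : S)
        = ⟨f.smulRight y, hS' f hf y⟩ + ⟨f.smulRight z, hS' f hf z⟩ := by
      ext u; simp
    have e2 := ha f hf _ hyz
    rw [e, map_add, ha f hf _ hy, ha f hf _ hz] at e2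
    have e3 : (a f z - a f (y + z)) • z = (a f (y + z) - a f y) • y := by
      rw [sub_smul, sub_smul]
      rw [smul_add] at e2
      rw [sub_eq_sub_iff_add_eq_add, add_comm, e2]
    have e4 : a f z - a f (y + z) = 0 := by
      by_contra h
      apply hind
      rw [← Submodule.smul_mem_iff _ h, e3]
      exact Submodule.smul_mem _ _ (Submodule.mem_span_singleton_self y)
    rw [e4, zero_smul, eq_comm, smul_eq_zero] at e3
    have e5 := e3.resolve_right (hy0 y hy)
    linear_combination -e4 - e5
  have fact2 : ∀ f : U →ₗ[K] K, f x0 = 0 → ∀ y, y ∉ D → ∀ c : K, c ≠ 0 →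
      a (c • f) y = c * a f (c • y) := by
    intro f hf y hy c hc
    have hcf : (c • f) x0 = 0 := by simp [hf]
    have hcy : c • y ∉ D := by rwa [Submodule.smul_mem_iff _ hc]
    have e : (⟨(c • f).smulRight y, hS' _ hcf y⟩ : S) = ⟨f.smulRight (c • y), hS' f hf _⟩ := by
      ext u; simp [smul_smul, mul_comm]
    have e1 := ha _ hcf y hy
    rw [e, ha f hf _ hcy, smul_smul] at e1
    have := smul_left_injective K (hy0 y hy) e1
    rw [← this, mul_comm]
  have factneg : ∀ f : U →ₗ[K] K, f x0 = 0 → ∀ y, y ∉ D → a f (-y) = a f y := by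
    intro f hf y hy
    have hcy : -y ∉ D := by rwa [Submodule.neg_mem_iff]
    have e : (⟨f.smulRight (-y), hS' _ hf _⟩ : S) = -⟨f.smulRight y, hS' f hf _⟩ := by
      ext u; simp
    have e1 := ha _ hf _ hcy
    rw [e, map_neg, ha f hf _ hy, smul_neg, neg_inj] at e1
    exact (smul_left_injective K (hy0 y hy) e1).symm
  have fact3 : ∀ f : U →ₗ[K] K, f x0 = 0 → ∀ y z, y ∉ D → z ∉ D →
      z ∉ Submodule.span K {y} → a f y = a f z := by
    intro f hf y z hy hz hind
    by_cases hyz : y + z ∈ D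
    · by_cases h2 : (2 : K) = 0
      · obtain ⟨m, hm0, hm1⟩ := hK
        have hw : y + m • z ∉ D := by
          intro h
          have := D.sub_mem h hyz
          rw [add_sub_add_left_eq_sub] at this
          have e : m • z - z = (m - 1) • z := by rw [sub_smul, one_smul]
          rw [e, Submodule.smul_mem_iff _ (sub_ne_zero.2 hm1)] at this
          exact hz this
        have hyy : ∀ v : V, v + v = 0 := by
          intro v; rw [← two_smul K, h2, zero_smul]
        rw [fact1 f hf y (y + m • z) hy hw, fact1 f hf z (y + m • z) hz hw]
        · intro h
          have := D.sub_mem h hyz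
          have e : z + (y + m • z) - (y + z) = m • z := by abel
          rw [e, Submodule.smul_mem_iff _ hm0] at this
          exact hz this
        · intro h
          rw [Submodule.add_mem_iff_left _ (Submodule.smul_mem _ _
            (Submodule.mem_span_singleton_self z)), Submodule.mem_span_singleton] at h
          obtain ⟨c, hc⟩ := h
          have c0 : c ≠ 0 := by
            rintro rfl; rw [zero_smul] at hc; exact hy0 y hy hc.symm
          apply hind
          rw [← Submodule.smul_mem_iff _ c0, hc]
          exact Submodule.mem_span_singleton_self y
        · rw [← add_assoc, hyy, zero_add, Submodule.smul_mem_iff _ hm0]; exact hz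
        · intro h
          rw [Submodule.add_mem_iff_right _ (Submodule.mem_span_singleton_self y),
            Submodule.smul_mem_iff _ hm0] at h
          exact hind h
      · rw [← factneg f hf z hz]
        apply fact1 f hf y (-z) hy (by rwa [Submodule.neg_mem_iff])
        · intro h
          have := D.sub_mem hyz h
          have e : y + z - (y + -z) = (2 : K) • z := by rw [two_smul]; abel
          rw [e, Submodule.smul_mem_iff _ h2] at this
          exact hz this
        · rwa [Submodule.neg_mem_iff]
    · exact fact1 f hf y z hy hz hyz hind
  have fact4 : ∀ f : U →ₗ[K] K, f x0 = 0 → ∀ y z, y ∉ D → z ∉ D → a f y = a f z := by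
    intro f hf y z hy hz
    obtain ⟨w, hwD, hwy, hwz⟩ := avoid3 hK D (Submodule.span K {y}) (Submodule.span K {z})
      (hline d) (hline y) (hline z)
    rw [fact3 f hf y w hy hwD hwy, fact3 f hf z w hz hwD hwz]
  obtain ⟨y0, hy0D, -, -⟩ := avoid3 hK D D D (hline d) (hline d) (hline d)
  let A : Submodule K (U →ₗ[K] K) := LinearMap.ker (LinearMap.applyₗ x0)
  have hA : ∀ f : A, f.1 x0 = 0 := fun f => f.2
  let al : A →ₗ[K] K :=
    { toFun := fun f => a f.1 y0
      map_add' := by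
        intro f g
        have e : (⟨(f.1 + g.1).smulRight y0, hS' _ (hA (f + g)) y0⟩ : S)
            = ⟨f.1.smulRight y0, hS' _ (hA f) y0⟩ + ⟨g.1.smulRight y0, hS' _ (hA g) y0⟩ := by
          ext u; simp [add_smul]
        have e2 := ha _ (hA (f + g)) y0 hy0D
        have e3 := e ▸ e2
        rw [map_add, ha _ (hA f) _ hy0D, ha _ (hA g) _ hy0D, ← add_smul] at e3
        exact (smul_left_injective K (hy0 y0 hy0D) e3).symm
      map_smul' := by
        intro c f
        by_cases hc : c = 0
        · subst hc
          have e : (⟨((0:K) • f.1).smulRight y0, hS' _ (hA ((0:K) • f)) y0⟩ : S) = 0 := by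
            ext u; simp
          have e2 := ha _ (hA ((0:K) • f)) y0 hy0D
          have e3 := e ▸ e2
          rw [map_zero, eq_comm, smul_eq_zero] at e3
          simpa using e3.resolve_right (hy0 y0 hy0D)
        · have := fact2 f.1 (hA f) y0 hy0D c hc
          rw [fact4 f.1 (hA f) (c • y0) y0 (by rwa [Submodule.smul_mem_iff _ hc]) hy0D] at this
          simpa using this }
  obtain ⟨be, hbe⟩ := LinearMap.exists_extend al
  obtain ⟨x, hx⟩ := (Module.evalEquiv K U).surjective be
  have hax : ∀ f : U →ₗ[K] K, f x0 = 0 → ∀ y, y ∉ D → a f y = f x := by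
    intro f hf y hy
    rw [fact4 f hf y y0 hy hy0D]
    have := LinearMap.congr_fun hbe ⟨f, hf⟩
    rw [← hx] at this
    exact this.symm
  have hfin : ∀ (f : U →ₗ[K] K) (hf : f x0 = 0) (y : V),
      F ⟨f.smulRight y, hS' f hf y⟩ = f x • y := by
    intro f hf y
    by_cases hy : y ∈ D
    · have hyy : y + y0 ∉ D := by
        rwa [Submodule.add_mem_iff_right _ hy]
      have e : (⟨f.smulRight y, hS' f hf y⟩ : S)
          = ⟨f.smulRight (y + y0), hS' f hf _⟩ - ⟨f.smulRight y0, hS' f hf _⟩ := by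
        ext u; simp
      rw [e, map_sub, ha f hf _ hyy, ha f hf _ hy0D, hax f hf _ hyy, hax f hf _ hy0D, smul_add]
      abel
    · rw [ha f hf y hy, hax f hf y hy]
  refine ⟨x, fun s => ?_⟩
  let b := Module.finBasis K V
  have hc : ∀ i, (b.coord i ∘ₗ s.1) x0 = 0 := by
    intro i; simp [(hS s.1).1 s.2]
  have e : s = ∑ i, (⟨(b.coord i ∘ₗ s.1).smulRight (b i), hS' _ (hc i) _⟩ : S) := by
    ext u
    simp only [AddSubmonoidClass.coe_finsetSum, LinearMap.sum_apply, LinearMap.smulRight_apply,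
      LinearMap.comp_apply]
    exact (b.sum_repr (s.1 u)).symm
  conv_lhs => rw [e]
  rw [map_sum, Finset.sum_congr rfl fun i _ => hfin _ (hc i) _]
  exact b.sum_repr (s.1 x)

lemma rn {X Y : Type*} [AddCommGroup X] [Module K X] [FiniteDimensional K X]
    [AddCommGroup Y] [Module K Y] (f : X →ₗ[K] Y) (W : Submodule K X) :
    finrank K (W.map f) + finrank K (W ⊓ LinearMap.ker f : Submodule K X) = finrank K W := by
  have h := (f.domRestrict W).finrank_range_add_finrank_ker
  rw [LinearMap.range_domRestrict] at h
  rw [← h, ← Submodule.finrank_map_subtype_eq W]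
  have : (LinearMap.ker (f.domRestrict W)).map W.subtype = W ⊓ LinearMap.ker f := by
    ext x
    simp [and_comm]
  rw [this]

/-- the space modulo a vector -/
abbrev modS (S : Submodule K (U →ₗ[K] V)) (y : V) :
    Submodule K (U →ₗ[K] (V ⧸ Submodule.span K {y})) :=
  S.map (LinearMap.compRight K (Submodule.span K {y}).mkQ)

lemma mem_ker_comp (y : V) (s : U →ₗ[K] V) :
    LinearMap.compRight K (Submodule.span K {y}).mkQ s = 0 ↔
      ∀ u, s u ∈ Submodule.span K {y} := by
  rw [LinearMap.ext_iff]
  simp [Submodule.Quotient.mk_eq_zero]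

lemma ex_dual {X : Type*} [AddCommGroup X] [Module K X] (x : X) (hx : x ≠ 0) :
    ∃ l : X →ₗ[K] K, l x = 1 := by
  by_contra! h
  apply hx
  rw [← Module.forall_dual_apply_eq_zero_iff K]
  intro l
  by_contra hl
  exact h ((l x)⁻¹ • l) (by simp [hl])

lemma ex_smulRight {X Y : Type*} [AddCommGroup X] [Module K X] [AddCommGroup Y] [Module K Y]
    (y : Y) (hy : y ≠ 0) (s : X →ₗ[K] Y) (hs : ∀ u, s u ∈ Submodule.span K {y}) :
    ∃ f : X →ₗ[K] K, s = f.smulRight y := by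
  obtain ⟨l, hl⟩ := ex_dual (K := K) y hy
  refine ⟨l ∘ₗ s, ?_⟩
  ext u
  obtain ⟨c, hc⟩ := Submodule.mem_span_singleton.1 (hs u)
  simp [← hc, hl]

lemma smulRight_inj {X Y : Type*} [AddCommGroup X] [Module K X] [AddCommGroup Y] [Module K Y]
    (y : Y) (hy : y ≠ 0) :
    Function.Injective ((LinearMap.smulRightₗ (R := K) (M := Y) (M₂ := X)).flip y) := by
  intro f g h
  ext u
  have := LinearMap.congr_fun h u
  simp only [LinearMap.flip_apply, LinearMap.smulRightₗ_apply] at this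
  exact smul_left_injective K hy this

lemma finrank_mod {S : Submodule K (U →ₗ[K] V)} {T} (h : Perp S T) (y : V) (hy : y ≠ 0) :
    finrank K (modS S y) + finrank K U = finrank K S + finrank K (ev T y) := by
  have h1 := rn (LinearMap.compRight K (Submodule.span K {y}).mkQ) S
  have h2 := Subspace.finrank_add_finrank_dualAnnihilator_eq (ev T y)
  have h3 : (S ⊓ LinearMap.ker (LinearMap.compRight K (Submodule.span K {y}).mkQ) :
      Submodule K (U →ₗ[K] V)) =
      (ev T y).dualAnnihilator.map ((LinearMap.smulRightₗ (R := K) (M := V) (M₂ := U)).flip y) := by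
    ext s
    rw [Submodule.mem_inf, LinearMap.mem_ker, mem_ker_comp]
    constructor
    · rintro ⟨hs, hr⟩
      obtain ⟨f, rfl⟩ := ex_smulRight y hy s hr
      rw [h.r1S] at hs
      refine ⟨f, ?_, rfl⟩
      rw [SetLike.mem_coe, Submodule.mem_dualAnnihilator]
      rintro _ ⟨t, ht, rfl⟩
      exact hs t ht
    · rintro ⟨f, hf, rfl⟩
      rw [SetLike.mem_coe, Submodule.mem_dualAnnihilator] at hf
      refine ⟨(h.r1S f y).2 fun t ht => hf _ ⟨t, ht, rfl⟩, fun u => ?_⟩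
      exact Submodule.smul_mem _ _ (Submodule.mem_span_singleton_self y)
  have h4 : finrank K (ev T y) + finrank K ((ev T y).dualAnnihilator.map
      ((LinearMap.smulRightₗ (R := K) (M := V) (M₂ := U)).flip y)) = finrank K U := by
    rw [← h2]
    congr 1
    exact (Submodule.equivMapOfInjective _ (smulRight_inj y hy) _).finrank_eq.symm
  rw [h3] at h1
  change finrank K (modS S y) + _ = _ at h1
  omega

lemma not_mem_span_symm {y d : V} (hd : d ≠ 0) (h : y ∉ Submodule.span K {d}) :
    d ∉ Submodule.span K {y} := by
  intro h'
  obtain ⟨c, hc⟩ := Submodule.mem_span_singleton.1 h'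
  have c0 : c ≠ 0 := by rintro rfl; rw [zero_smul] at hc; exact hd hc.symm
  apply h
  rw [← Submodule.smul_mem_iff _ c0, hc]
  exact Submodule.mem_span_singleton_self d

lemma lift_hom {A B C : Type*} [AddCommGroup A] [AddCommGroup B] [AddCommGroup C]
    (p : A →+ B) (hp : Function.Surjective p) (q : A →+ C) (h : ∀ a, p a = 0 → q a = 0) :
    ∃ r : B →+ C, ∀ a, r (p a) = q a :=
  ⟨p.liftOfSurjective hp ⟨q, fun a ha => h a ha⟩, fun a =>
    AddMonoidHom.liftOfRightInverse_comp_apply _ _ (Function.rightInverse_surjInv hp) ⟨q, _⟩ a⟩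

lemma modstep {S : Submodule K (U →ₗ[K] V)} {F : S →+ V} {d : V} (hd : d ≠ 0) (hF : QR S F d)
    {y : V} (hy : y ∉ Submodule.span K {d})
    (hl : ∀ (F' : modS S y →+ V ⧸ Submodule.span K {y}) (d' : V ⧸ Submodule.span K {y}),
      d' ≠ 0 → QR (modS S y) F' d' → Loc (modS S y) F') :
    ∃ x : U, ∀ s : S, F s - s.1 x ∈ Submodule.span K {y} := by
  have hdy := not_mem_span_symm hd hy
  let p : S →ₗ[K] modS S y :=
    (LinearMap.compRight K (Submodule.span K {y}).mkQ).submoduleMap S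
  have hp : Function.Surjective p := LinearMap.submoduleMap_surjective _ _
  have hpa : ∀ s, (p s).1 = (Submodule.span K {y}).mkQ ∘ₗ s.1 := fun s => rfl
  obtain ⟨F', hF'⟩ : ∃ F' : modS S y →+ V ⧸ Submodule.span K {y},
      ∀ s, F' (p s) = (Submodule.span K {y}).mkQ (F s) := by
    refine lift_hom (A := S) (B := modS S y) (p : S →+ modS S y) hp ((Submodule.span K {y}).mkQ.toAddMonoidHom.comp F) ?_
    intro s hs
    have hs' : (p s).1 = 0 := by
      have : p s = 0 := hs
      rw [this]; rfl
    have hr := (mem_ker_comp y s.1).1 hs'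
    have : F s ∈ LinearMap.range s.1 := by
      apply hF
      rintro ⟨u, hu⟩
      exact hdy (hu ▸ hr u)
    obtain ⟨u, hu⟩ := this
    change (Submodule.span K {y}).mkQ (F s) = 0
    rw [← hu, Submodule.mkQ_apply, Submodule.Quotient.mk_eq_zero]
    exact hr u
  obtain ⟨x, hx⟩ := hl F' ((Submodule.span K {y}).mkQ d)
    (by rwa [Submodule.mkQ_apply, Ne, Submodule.Quotient.mk_eq_zero]) (by
      intro s' hs'
      obtain ⟨s, rfl⟩ := hp s'
      have : F s ∈ LinearMap.range s.1 := by
        apply hF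
        rintro ⟨u, hu⟩
        apply hs'
        exact ⟨u, by rw [hpa, LinearMap.comp_apply, hu]⟩
      obtain ⟨u, hu⟩ := this
      exact ⟨u, by rw [hpa, hF', ← hu, LinearMap.comp_apply]⟩)
  refine ⟨x, fun s => ?_⟩
  have := hx (p s)
  rw [hF', hpa] at this
  rw [← Submodule.Quotient.eq]
  exact this

lemma glue {S : Submodule K (U →ₗ[K] V)} {F : S →+ V} {y1 y2 : V} {x1 x2 : U}
    (hy2 : y2 ∉ Submodule.span K {y1})
    (h1 : ∀ s : S, F s - s.1 x1 ∈ Submodule.span K {y1})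
    (h2 : ∀ s : S, F s - s.1 x2 ∈ Submodule.span K {y2})
    (h : ∀ s ∈ S, s (x1 - x2) = 0) : Loc S F := by
  refine ⟨x1, fun s => ?_⟩
  have e := h s.1 s.2
  rw [map_sub, sub_eq_zero] at e
  have a1 := h1 s
  have a2 := h2 s
  rw [← e] at a2
  obtain ⟨c, hc⟩ := Submodule.mem_span_singleton.1 a2
  by_cases c0 : c = 0
  · rw [c0, zero_smul] at hc
    exact sub_eq_zero.1 hc.symm
  · rw [← hc, Submodule.smul_mem_iff _ c0] at a1
    exact absurd a1 hy2

/-- vectors mapped into `P` by all of `T` -/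
def kil (T : Submodule K (V →ₗ[K] U)) (P : Submodule K U) : Submodule K V where
  carrier := {y | ∀ t ∈ T, t y ∈ P}
  add_mem' := by
    intro a b ha hb t ht
    rw [map_add]; exact P.add_mem (ha t ht) (hb t ht)
  zero_mem' := by intro t _; rw [map_zero]; exact P.zero_mem
  smul_mem' := by
    intro c a ha t ht
    rw [map_smul]; exact P.smul_mem c (ha t ht)

lemma mem_kil (T : Submodule K (V →ₗ[K] U)) (P : Submodule K U) (y : V) :
    y ∈ kil T P ↔ ∀ t ∈ T, t y ∈ P := Iff.rfl

lemma col {S : Submodule K (U →ₗ[K] V)} {T} (h : Perp S T) (x : U) (hx : x ≠ 0) :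
    ∃ N ≤ T, finrank K N + finrank K (ev S x) = finrank K V ∧
      (∀ t, t ∈ N ↔ ∃ g : V →ₗ[K] K, (∀ s ∈ S, g (s x) = 0) ∧ t = g.smulRight x) ∧
      (∀ t ∈ T, (∀ v, t v ∈ Submodule.span K {x}) → t ∈ N) := by
  have h2 := Subspace.finrank_add_finrank_dualAnnihilator_eq (ev S x)
  have key : ∀ t, t ∈ (ev S x).dualAnnihilator.map
      ((LinearMap.smulRightₗ (R := K) (M := U) (M₂ := V)).flip x) ↔
      ∃ g : V →ₗ[K] K, (∀ s ∈ S, g (s x) = 0) ∧ t = g.smulRight x := by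
    intro t
    constructor
    · rintro ⟨g, hg, rfl⟩
      rw [SetLike.mem_coe, Submodule.mem_dualAnnihilator] at hg
      exact ⟨g, fun s hs => hg _ ⟨s, hs, rfl⟩, rfl⟩
    · rintro ⟨g, hg, rfl⟩
      refine ⟨g, ?_, rfl⟩
      rw [SetLike.mem_coe, Submodule.mem_dualAnnihilator]
      rintro _ ⟨s, hs, rfl⟩
      exact hg s hs
  refine ⟨_, ?_, ?_, key, ?_⟩
  · intro t ht
    obtain ⟨g, hg, rfl⟩ := (key t).1 ht
    exact (h.r1T g x).2 hg
  · rw [← h2, add_comm]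
    congr 1
    exact (Submodule.equivMapOfInjective _ (smulRight_inj x hx) _).finrank_eq.symm
  · intro t ht hr
    obtain ⟨g, rfl⟩ := ex_smulRight x hx t hr
    exact (key _).2 ⟨g, (h.r1T g x).1 ht, rfl⟩

lemma span1_ne_top (hn : 2 ≤ finrank K V) (v : V) : Submodule.span K {v} ≠ ⊤ := by
  intro h
  have h1 := finrank_span_le_card (R := K) ({v} : Set V)
  rw [h, finrank_top] at h1
  simp at h1; omega

lemma finrank_span2 (v w : V) : finrank K (Submodule.span K {v, w}) ≤ 2 := by
  classical
  have h1 := finrank_span_le_card (R := K) ({v, w} : Set V)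
  refine h1.trans ?_
  rw [Set.toFinset_insert, Set.toFinset_singleton]
  exact Finset.card_le_two

lemma ne_top_of_finrank (P : Submodule K V) (h : finrank K P < finrank K V) : P ≠ ⊤ := by
  rintro rfl
  rw [finrank_top] at h; omega

lemma le_of_fr1 (W : Submodule K U) (h : finrank K W ≤ 1) (w : U) (hw : w ∈ W) (hw0 : w ≠ 0) :
    W ≤ Submodule.span K {w} := by
  have h1 : Submodule.span K {w} ≤ W := (Submodule.span_singleton_le_iff_mem _ _).2 hw
  have h2 : finrank K W ≤ finrank K (Submodule.span K {w}) := by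
    rw [finrank_span_singleton hw0]; exact h
  rw [Submodule.eq_of_le_of_finrank_le h1 h2]

lemma rankone (hK : ∃ m : K, m ≠ 0 ∧ m ≠ 1) (T : Submodule K (V →ₗ[K] U)) (H : Submodule K V)
    (hH : H ≠ ⊤) (h1 : ∀ y ∉ H, finrank K (ev T y) ≤ 1) (hT : 2 ≤ finrank K T) :
    ∃ x : U, x ≠ 0 ∧ ∀ t ∈ T, ∀ v, t v ∈ Submodule.span K {x} := by
  have mev : ∀ t ∈ T, ∀ y, t y ∈ ev T y := fun t ht y => ⟨t, ht, rfl⟩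
  obtain ⟨m, hm0, hm1⟩ := hK
  have pair : ∀ y ∉ H, ∀ z ∉ H, (∀ t ∈ T, t y = 0 → t z = 0) ∨ ev T y ≤ ev T z := by
    intro y hy z hz
    by_contra! hh
    obtain ⟨⟨t, ht, hty, htz⟩, hle⟩ := hh
    apply hle
    obtain ⟨c, hc0, hc⟩ : ∃ c : K, c ≠ 0 ∧ y + c • z ∉ H := by
      by_contra! hh
      have := H.sub_mem (hh m hm0) (hh 1 one_ne_zero)
      rw [add_sub_add_left_eq_sub, ← sub_smul, Submodule.smul_mem_iff _ (sub_ne_zero.2 hm1)] at this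
      exact hz this
    have e1 := le_of_fr1 _ (h1 z hz) (t z) (mev t ht z) htz
    have e2 := le_of_fr1 _ (h1 _ hc) (c • t z) (by
      have := mev t ht (y + c • z)
      rwa [map_add, hty, zero_add, map_smul] at this) (smul_ne_zero hc0 htz)
    rintro _ ⟨t', ht', rfl⟩
    have a1 := e1 (mev t' ht' z)
    have a2 := e2 (mev t' ht' (y + c • z))
    have le : Submodule.span K {t z} ≤ ev T z :=
      (Submodule.span_singleton_le_iff_mem _ _).2 (mev t ht z)
    have le2 : Submodule.span K {c • t z} ≤ Submodule.span K {t z} :=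
      (Submodule.span_singleton_le_iff_mem _ _).2
        (Submodule.smul_mem _ _ (Submodule.mem_span_singleton_self _))
    apply le
    have a3 := le2 a2
    rw [map_add, map_smul] at a3
    exact (Submodule.add_mem_iff_left _ (Submodule.smul_mem _ _ a1)).1 a3
  obtain ⟨z0, hz0⟩ : ∃ z, z ∉ H := by
    by_contra! h
    exact hH (Submodule.eq_top_iff'.2 h)
  have spn : ∀ (t : V →ₗ[K] U) (P : Submodule K U), (∀ y ∉ H, t y ∈ P) → ∀ v, t v ∈ P := by
    intro t P hP v
    by_cases hv : v ∈ H
    · have a1 := hP (v + z0) (by rwa [Submodule.add_mem_iff_right _ hv])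
      rw [map_add] at a1
      exact (Submodule.add_mem_iff_left _ (hP z0 hz0)).1 a1
    · exact hP v hv
  have spn0 : ∀ (t : V →ₗ[K] U), (∀ y ∉ H, t y = 0) → t = 0 := by
    intro t ht
    ext v
    simpa using spn t ⊥ (by simpa using ht) v
  obtain ⟨t, ht, ht0⟩ : ∃ t ∈ T, t ≠ 0 := by
    apply Submodule.exists_mem_ne_zero_of_ne_bot
    rintro rfl
    simp at hT
  obtain ⟨y1, hy1, hty1⟩ : ∃ y, y ∉ H ∧ t y ≠ 0 := by
    by_contra! h
    exact ht0 (spn0 t h)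
  have le1 := le_of_fr1 _ (h1 y1 hy1) _ (mev t ht y1) hty1
  have le1' : Submodule.span K {t y1} ≤ ev T y1 :=
    (Submodule.span_singleton_le_iff_mem _ _).2 (mev t ht y1)
  by_cases hc : ∀ y ∉ H, ev T y ≤ ev T y1
  · refine ⟨t y1, hty1, fun t' ht' v => spn t' _ (fun y hy => ?_) v⟩
    exact le1 (hc y hy (mev t' ht' y))
  exfalso
  push Not at hc
  obtain ⟨y2, hy2, hnle⟩ := hc
  have big : ∀ y ∉ H, ev T y1 ≤ ev T y → ev T y ≤ ev T y1 := by
    intro y hy h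
    exact (le_of_fr1 _ (h1 y hy) _ (h (mev t ht y1)) hty1).trans le1'
  have N12 := (pair y1 hy1 y2 hy2).resolve_right fun h => hnle (big y2 hy2 h)
  have kill : ∀ t' ∈ T, t' y1 = 0 → t' = 0 := by
    intro t' ht' h0
    apply spn0
    intro y hy
    rcases pair y1 hy1 y hy with h | h
    · exact h t' ht' h0
    · rcases pair y2 hy2 y hy with h' | h'
      · exact h' t' ht' (N12 t' ht' h0)
      · exact absurd (h'.trans (big y hy h)) hnle
  have : T ≤ Submodule.span K {t} := by
    intro t' ht'
    obtain ⟨c, hc⟩ := Submodule.mem_span_singleton.1 (le1 (mev t' ht' y1))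
    have := kill (t' - c • t) (T.sub_mem ht' (T.smul_mem c ht)) (by simp [hc])
    rw [Submodule.mem_span_singleton]
    exact ⟨c, (sub_eq_zero.1 this).symm⟩
  have := Submodule.finrank_mono this
  rw [finrank_span_singleton ht0] at this
  omega

lemma finrank_quot (y : V) (hy : y ≠ 0) :
    finrank K (V ⧸ Submodule.span K {y}) + 1 = finrank K V := by
  have := Submodule.finrank_quotient_add_finrank (Submodule.span K {y})
  rwa [finrank_span_singleton hy] at this

lemma span2_mem {S : Submodule K (U →ₗ[K] V)} {F : S →+ V} {y1 y2 : V} {x1 x2 : U}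
    (h1 : ∀ s : S, F s - s.1 x1 ∈ Submodule.span K {y1})
    (h2 : ∀ s : S, F s - s.1 x2 ∈ Submodule.span K {y2}) :
    ev S (x1 - x2) ≤ Submodule.span K {y1, y2} := by
  rintro _ ⟨s, hs, rfl⟩
  have a1 := Submodule.span_mono (s := {y1}) (t := {y1, y2}) (by simp) (h1 ⟨s, hs⟩)
  have a2 := Submodule.span_mono (s := {y2}) (t := {y1, y2}) (by simp) (h2 ⟨s, hs⟩)
  have := Submodule.sub_mem _ a2 a1
  rw [sub_sub_sub_cancel_left] at this
  simpa using this

end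

lemma thmQ (K : Type*) [Field K] (hK : ∃ m : K, m ≠ 0 ∧ m ≠ 1) (U : Type*)
    [AddCommGroup U] [Module K U] [FiniteDimensional K U] (n : ℕ) :
    ∀ (V : Type*) [AddCommGroup V] [Module K V] [FiniteDimensional K V],
    finrank K V = n → 2 ≤ n → ∀ S : Submodule K (U →ₗ[K] V),
    finrank K (U →ₗ[K] V) + 2 ≤ finrank K S + finrank K V →
    ∀ (F : S →+ V) (d : V), d ≠ 0 → QR S F d → Loc S F := by
  induction n with
  | zero => intro V _ _ _ _ h; omega
  | succ n ih =>
    intro V _ _ _ hV hn S hc F d hd hF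
    obtain ⟨T, hT⟩ := exists_perp S
    have hTd := hT.dim
    by_cases hTb : T = ⊥
    · refine base hK (hV ▸ hn) S 0 (fun s => ?_) F d hd hF
      rw [hT.memS, hTb]
      simp
    have hTpos : 1 ≤ finrank K T := by
      rw [Nat.one_le_iff_ne_zero, Ne, Submodule.finrank_eq_zero]; exact hTb
    have hn3 : 3 ≤ n + 1 := by omega
    have hW : kil T ⊥ ≠ ⊤ := by
      intro h
      apply hTb
      rw [eq_bot_iff]
      intro t ht
      rw [Submodule.mem_bot]
      ext v
      have : v ∈ kil T ⊥ := by rw [h]; trivial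
      exact this t ht
    have step : ∀ y, y ∉ Submodule.span K {d} → y ∉ kil T ⊥ →
        ∃ x : U, ∀ s : S, F s - s.1 x ∈ Submodule.span K {y} := by
      intro y hyd hyW
      have hy0 : y ≠ 0 := by rintro rfl; exact hyW (Submodule.zero_mem _)
      have hq := finrank_quot (K := K) y hy0
      have hm := finrank_mod hT y hy0
      have hev : 1 ≤ finrank K (ev T y) := by
        rw [Nat.one_le_iff_ne_zero, Ne, Submodule.finrank_eq_zero]
        intro h
        apply hyW
        intro t ht
        rw [← h]
        exact ⟨t, ht, rfl⟩
      refine modstep hd hF hyd (ih _ (by omega) (by omega) (modS S y) ?_)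
      rw [finrank_linearMap] at hc ⊢
      have : finrank K V = n + 1 := hV
      have e2 : finrank K (V ⧸ Submodule.span K {y}) = n := by omega
      rw [this] at hc
      rw [e2]
      rw [mul_add, mul_one] at hc
      omega
    obtain ⟨y1, hy1d, hy1W, -⟩ := avoid3 hK (Submodule.span K {d}) (kil T ⊥) (kil T ⊥)
      (span1_ne_top (by omega) d) hW hW
    obtain ⟨y2, hy2d, hy2W, -⟩ := avoid3 hK (Submodule.span K {d, y1}) (kil T ⊥) (kil T ⊥)
      (ne_top_of_finrank _ ((finrank_span2 d y1).trans_lt (by omega))) hW hW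
    have hy21 : y2 ∉ Submodule.span K {y1} := fun h =>
      hy2d (Submodule.span_mono (by simp) h)
    have hy2d' : y2 ∉ Submodule.span K {d} := fun h =>
      hy2d (Submodule.span_mono (by simp) h)
    obtain ⟨x1, hx1⟩ := step y1 hy1d hy1W
    obtain ⟨x2, hx2⟩ := step y2 hy2d' hy2W
    by_cases hx : x1 - x2 = 0
    · exact glue hy21 hx1 hx2 (fun s _ => by rw [hx, map_zero])
    exfalso
    have hle := span2_mem hx1 hx2
    obtain ⟨N, hNT, hNd, hN, -⟩ := col hT _ hx
    have hfr := (Submodule.finrank_mono hle).trans (finrank_span2 y1 y2)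
    have hNe : N = T := Submodule.eq_of_le_of_finrank_le hNT (by omega)
    have hS2 : finrank K (ev S (x1 - x2)) = 2 := by
      have := Submodule.finrank_mono hNT
      rw [hNe] at hNd
      omega
    have hSe : ev S (x1 - x2) = Submodule.span K {y1, y2} :=
      Submodule.eq_of_le_of_finrank_le hle (by rw [hS2]; exact finrank_span2 y1 y2)
    apply hy1W
    intro t ht
    rw [← hNe, hN] at ht
    obtain ⟨g, hg, rfl⟩ := ht
    have : y1 ∈ ev S (x1 - x2) := by
      rw [hSe]; exact Submodule.subset_span (by simp)
    obtain ⟨s, hs, hsy⟩ := this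
    have := hg s hs
    change s (x1 - x2) = y1 at hsy
    rw [hsy] at this
    simp [this]

section
variable {K U V : Type*} [Field K] [AddCommGroup U] [Module K U] [FiniteDimensional K U]
    [AddCommGroup V] [Module K V] [FiniteDimensional K V]

lemma mod_type {S : Submodule K (U →ₗ[K] V)} {y : V} (hy : y ≠ 0) {x : U}
    (h : finrank K (ev (modS S y) x) = 1) :
    finrank K (ev S x) = 1 ∨ (finrank K (ev S x) = 2 ∧ y ∈ ev S x) := by
  have e : ev (modS S y) x = (ev S x).map (Submodule.span K {y}).mkQ := by
    ext v
    constructor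
    · rintro ⟨_, ⟨s, hs, rfl⟩, rfl⟩
      exact ⟨s x, ⟨s, hs, rfl⟩, rfl⟩
    · rintro ⟨_, ⟨s, hs, rfl⟩, rfl⟩
      exact ⟨_, ⟨s, hs, rfl⟩, rfl⟩
  have h1 := rn (Submodule.span K {y}).mkQ (ev S x)
  rw [← e, h, Submodule.ker_mkQ] at h1
  have h2 : finrank K (ev S x ⊓ Submodule.span K {y} : Submodule K V) ≤ 1 := by
    rw [← finrank_span_singleton (K := K) hy]
    exact Submodule.finrank_mono inf_le_right
  by_cases h3 : finrank K (ev S x ⊓ Submodule.span K {y} : Submodule K V) = 0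
  · left; omega
  · right
    refine ⟨by omega, ?_⟩
    have : (ev S x ⊓ Submodule.span K {y} : Submodule K V) = Submodule.span K {y} :=
      Submodule.eq_of_le_of_finrank_le inf_le_right (by rw [finrank_span_singleton hy]; omega)
    have hm : y ∈ (ev S x ⊓ Submodule.span K {y} : Submodule K V) := by
      rw [this]; exact Submodule.mem_span_singleton_self y
    exact hm.1

/-- good vectors -/
def Good (S : Submodule K (U →ₗ[K] V)) (T : Submodule K (V →ₗ[K] U)) (y : V) : Prop :=
  2 ≤ finrank K (ev T y) ∧ ∀ x, finrank K (ev S x) = 2 → y ∉ ev S x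

lemma exists_good (hK : ∃ m : K, m ≠ 0 ∧ m ≠ 1) {S : Submodule K (U →ₗ[K] V)}
    {T : Submodule K (V →ₗ[K] U)} (hT : Perp S T) (d : V) (hn : 3 ≤ finrank K V)
    (hc1 : finrank K V ≤ finrank K T + 1) (hc2 : finrank K T + 4 ≤ 2 * finrank K V)
    (h1 : ∀ x, finrank K (ev S x) ≠ 1) :
    (∃ x, ∀ s, s ∈ S ↔ s x = 0) ∨
    ∃ y1 y2, Good S T y1 ∧ Good S T y2 ∧ y1 ∉ Submodule.span K {d} ∧
      y2 ∉ Submodule.span K {d, y1} := by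
  by_cases hx : ∃ x, finrank K (ev S x) = 2
  · right
    obtain ⟨x, hx⟩ := hx
    have hx0 : x ≠ 0 := by
      rintro rfl
      have : ev S (0 : U) = ⊥ := by
        rw [eq_bot_iff]; rintro _ ⟨s, hs, rfl⟩; simp
      rw [this] at hx; simp at hx
    obtain ⟨N, hNT, hNd, hN, hN'⟩ := col hT x hx0
    have hW : kil T (Submodule.span K {x}) ≠ ⊤ := by
      intro h
      have : T ≤ N := by
        intro t ht
        apply hN' t ht
        intro v
        have : v ∈ kil T (Submodule.span K {x}) := by rw [h]; trivial
        exact this t ht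
      have := Submodule.finrank_mono this
      omega
    have hP : ev S x ≠ ⊤ := ne_top_of_finrank _ (by omega)
    have good : ∀ y, y ∉ ev S x → y ∉ kil T (Submodule.span K {x}) → Good S T y := by
      intro y hyP hyW
      have hxT : x ∈ ev T y := by
        obtain ⟨g, hg, hg'⟩ : ∃ g ∈ (ev S x).dualAnnihilator, g y ≠ 0 := by
          by_contra! hh
          apply hyP
          rw [← Subspace.dualAnnihilator_dualCoannihilator_eq (W := ev S x),
            Submodule.mem_dualCoannihilator]
          exact hh
        rw [Submodule.mem_dualAnnihilator] at hg
        have := (hT.r1T g x).2 fun s hs => hg _ ⟨s, hs, rfl⟩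
        have h2 : g y • x ∈ ev T y := ⟨_, this, rfl⟩
        rwa [Submodule.smul_mem_iff _ hg'] at h2
      refine ⟨?_, ?_⟩
      · by_contra hlt
        apply hyW
        intro t ht
        exact le_of_fr1 (ev T y) (by omega) x hxT hx0 ⟨t, ht, rfl⟩
      · intro x' hx' hyx'
        by_cases hcol : x' ∈ Submodule.span K {x}
        · obtain ⟨c, rfl⟩ := Submodule.mem_span_singleton.1 hcol
          apply hyP
          obtain ⟨s, hs, rfl⟩ := hyx'
          exact ⟨c • s, S.smul_mem c hs, by simp⟩
        · have hx'0 : x' ≠ 0 := by rintro rfl; exact hcol (Submodule.zero_mem _)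
          obtain ⟨N2, hN2T, hN2d, hN2, -⟩ := col hT x' hx'0
          have hdis : N ⊓ N2 = ⊥ := by
            rw [eq_bot_iff]
            rintro t ⟨ht1, ht2⟩
            obtain ⟨g, -, rfl⟩ := (hN t).1 ht1
            obtain ⟨g2, -, e⟩ := (hN2 _).1 ht2
            rw [Submodule.mem_bot]
            have e0 : g2 = 0 := by
              ext v
              by_contra hv
              apply hcol
              have := LinearMap.congr_fun e v
              simp only [LinearMap.smulRight_apply] at this
              rw [← Submodule.smul_mem_iff _ hv, ← this]
              exact Submodule.smul_mem _ _ (Submodule.mem_span_singleton_self _)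
            rw [e, e0]; ext v; simp
          have hsup := Submodule.finrank_sup_add_finrank_inf_eq N N2
          rw [hdis, finrank_bot] at hsup
          have hE : N ⊔ N2 = T :=
            Submodule.eq_of_le_of_finrank_le (sup_le hNT hN2T) (by omega)
          apply hyW
          intro t ht
          rw [← hE, Submodule.mem_sup] at ht
          obtain ⟨a, ha, b, hb, rfl⟩ := ht
          obtain ⟨g, -, rfl⟩ := (hN a).1 ha
          obtain ⟨g2, hg2, rfl⟩ := (hN2 b).1 hb
          obtain ⟨s, hs, rfl⟩ := hyx'
          have e := hg2 s hs
          simp only [LinearMap.applyₗ_apply_apply, LinearMap.add_apply,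
            LinearMap.smulRight_apply, e, zero_smul, add_zero]
          exact Submodule.smul_mem _ _ (Submodule.mem_span_singleton_self _)
    obtain ⟨y1, hy1d, hy1P, hy1W⟩ := avoid3 hK _ _ _ (span1_ne_top (by omega) d) hP hW
    obtain ⟨y2, hy2d, hy2P, hy2W⟩ := avoid3 hK _ _ _ (ne_top_of_finrank _
      ((finrank_span2 (K := K) d y1).trans_lt (by omega))) hP hW
    exact ⟨y1, y2, good y1 hy1P hy1W, good y2 hy2P hy2W, hy1d, hy2d⟩
  · push Not at hx
    have good : ∀ y, 2 ≤ finrank K (ev T y) → Good S T y := fun y h =>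
      ⟨h, fun x h' => absurd h' (hx x)⟩
    by_cases hg : ∃ y1 y2, Good S T y1 ∧ Good S T y2 ∧ y1 ∉ Submodule.span K {d} ∧
      y2 ∉ Submodule.span K {d, y1}
    · exact Or.inr hg
    left
    obtain ⟨H, hH, hH1⟩ : ∃ H : Submodule K V, H ≠ ⊤ ∧ ∀ y ∉ H, finrank K (ev T y) ≤ 1 := by
      by_cases hy : ∃ y1, y1 ∉ Submodule.span K {d} ∧ 2 ≤ finrank K (ev T y1)
      · obtain ⟨y1, hy1, hy1'⟩ := hy
        refine ⟨Submodule.span K {d, y1}, ne_top_of_finrank _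
          ((finrank_span2 (K := K) d y1).trans_lt (by omega)), fun y hy => ?_⟩
        by_contra hlt
        exact hg ⟨y1, y, good _ hy1', good _ (by omega), hy1, hy⟩
      · push Not at hy
        exact ⟨_, span1_ne_top (by omega) d, fun y h => by have := hy y h; omega⟩
    obtain ⟨x, hx0, hxT⟩ := rankone hK T H hH hH1 (by omega)
    obtain ⟨N, hNT, hNd, hN, hN'⟩ := col hT x hx0
    have hNe : N = T := le_antisymm hNT fun t ht => hN' t ht (hxT t ht)
    have hz : finrank K (ev S x) = 0 := by
      have := h1 x
      rw [hNe] at hNd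
      omega
    rw [Submodule.finrank_eq_zero] at hz
    refine ⟨x, fun s => ⟨fun hs => ?_, fun hs => ?_⟩⟩
    · have : s x ∈ ev S x := ⟨s, hs, rfl⟩
      rwa [hz, Submodule.mem_bot] at this
    · rw [hT.memS]
      intro t ht
      rw [← hNe, hN] at ht
      obtain ⟨g, -, rfl⟩ := ht
      rw [trace_r1, hs, map_zero]

end

lemma thmP (K : Type*) [Field K] (hK : ∃ m : K, m ≠ 0 ∧ m ≠ 1) (U : Type*)
    [AddCommGroup U] [Module K U] [FiniteDimensional K U] (n : ℕ) :
    ∀ (V : Type*) [AddCommGroup V] [Module K V] [FiniteDimensional K V],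
    finrank K V = n → ∀ S : Submodule K (U →ₗ[K] V),
    finrank K (U →ₗ[K] V) + 4 ≤ finrank K S + 2 * finrank K V →
    (∀ x, finrank K (ev S x) ≠ 1) →
    ∀ (F : S →+ V) (d : V), d ≠ 0 → QR S F d → Loc S F := by
  induction n with
  | zero =>
    intro V _ _ _ hV S h
    have := Submodule.finrank_le S
    omega
  | succ n ih =>
    intro V _ _ _ hV S hc h1 F d hd hF
    have hSle := Submodule.finrank_le S
    by_cases hsmall : finrank K (U →ₗ[K] V) + 2 ≤ finrank K S + finrank K V
    · exact thmQ K hK U (n + 1) V hV (by omega) S hsmall F d hd hF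
    obtain ⟨T, hT⟩ := exists_perp S
    have hTd := hT.dim
    rcases exists_good hK hT d (by omega) (by omega) (by omega) h1 with ⟨x, hx⟩ | hg
    · exact base hK (by omega) S x hx F d hd hF
    obtain ⟨y1, y2, hg1, hg2, hy1d, hy2d⟩ := hg
    have step : ∀ y, y ∉ Submodule.span K {d} → Good S T y →
        ∃ x : U, ∀ s : S, F s - s.1 x ∈ Submodule.span K {y} := by
      intro y hyd hyG
      have hy0 : y ≠ 0 := by rintro rfl; exact hyd (Submodule.zero_mem _)
      have hq := finrank_quot (K := K) y hy0
      have hm := finrank_mod hT y hy0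
      have hev := hyG.1
      refine modstep hd hF hyd (ih _ (by omega) (modS S y) ?_ ?_)
      · rw [finrank_linearMap] at hc ⊢
        have e2 : finrank K (V ⧸ Submodule.span K {y}) = n := by omega
        rw [hV] at hc
        rw [e2]
        rw [mul_add, mul_one] at hc
        omega
      · intro x hx
        rcases mod_type hy0 hx with h | ⟨h, h'⟩
        · exact h1 x h
        · exact hyG.2 x h h'
    have hy21 : y2 ∉ Submodule.span K {y1} := fun h =>
      hy2d (Submodule.span_mono (by simp) h)
    have hy2d' : y2 ∉ Submodule.span K {d} := fun h =>
      hy2d (Submodule.span_mono (by simp) h)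
    obtain ⟨x1, hx1⟩ := step y1 hy1d hg1
    obtain ⟨x2, hx2⟩ := step y2 hy2d' hg2
    have hle := span2_mem hx1 hx2
    have hfr := (Submodule.finrank_mono hle).trans (finrank_span2 y1 y2)
    have hne := h1 (x1 - x2)
    by_cases h0 : finrank K (ev S (x1 - x2)) = 0
    · rw [Submodule.finrank_eq_zero] at h0
      refine glue hy21 hx1 hx2 (fun s hs => ?_)
      have : s (x1 - x2) ∈ ev S (x1 - x2) := ⟨s, hs, rfl⟩
      rwa [h0, Submodule.mem_bot] at this
    · exfalso
      have hS2 : finrank K (ev S (x1 - x2)) = 2 := by omega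
      have hSe : ev S (x1 - x2) = Submodule.span K {y1, y2} :=
        Submodule.eq_of_le_of_finrank_le hle (by rw [hS2]; exact finrank_span2 y1 y2)
      apply hg1.2 _ hS2
      rw [hSe]; exact Submodule.subset_span (by simp)

end QRC


/-- Let `K` have more than 2 elements and `S` a linear subspace of
`L(U,V)` with `codim S ≤ 2 dim V − 4`. Then either `S` has special type 1 (there is
`x ∈ U` with `dim Sx = 1`), or every quasi-range-compatible additive homomorphism
`F : S → V` is local. -/
theorem quasi_range_compatible_hom_local_or_special_type_one
    (K U V : Type*) [Field K] (hK : 2 < Cardinal.mk K)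
    [AddCommGroup U] [Module K U] [FiniteDimensional K U]
    [AddCommGroup V] [Module K V] [FiniteDimensional K V]
    (S : Submodule K (U →ₗ[K] V))
    (h1 : Module.finrank K (U →ₗ[K] V) + 4 ≤
      Module.finrank K S + 2 * Module.finrank K V) :
    (∃ x : U, Module.finrank K (Submodule.map (LinearMap.applyₗ x) S) = 1) ∨
    (∀ F : ↥S →+ V,
      (∃ D : Submodule K V, Module.finrank K D = 1 ∧
        ∀ s : ↥S, ¬ D ≤ LinearMap.range (s : U →ₗ[K] V) →
          F s ∈ LinearMap.range (s : U →ₗ[K] V)) →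
      ∃ x : U, ∀ s : ↥S, F s = (s : U →ₗ[K] V) x) := by
  by_cases h : ∃ x : U, Module.finrank K (Submodule.map (LinearMap.applyₗ x) S) = 1
  · exact Or.inl h
  right
  push Not at h
  rintro F ⟨D, hD, hF⟩
  obtain ⟨d, hd, hd'⟩ := finrank_eq_one_iff'.1 hD
  have hDd : D = Submodule.span K {(d : V)} := by
    apply le_antisymm
    · intro v hv
      obtain ⟨c, hc⟩ := hd' ⟨v, hv⟩
      rw [Submodule.mem_span_singleton]
      exact ⟨c, congrArg Subtype.val hc⟩
    · exact (Submodule.span_singleton_le_iff_mem _ _).2 d.2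
  refine QRC.thmP K (QRC.ex_mu hK) U _ V rfl S h1 h F d ?_ ?_
  · simpa using hd
  · intro s hs
    apply hF
    rwa [hDd, Submodule.span_singleton_le_iff_mem]
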